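/- Fix an integer n ≥ 1. Let Ω₁ ∈ τ_s(ℍ_s^n) be real-path-connected, let Ω₂ ∈ τ_s(ℍ_s^n) be Ω₁-stem-preserving, and let f ∈ 𝒮ℛ(Ω₁) and g ∈ 𝒮ℛ(Ω₂). Then the *-product f*g : Ω₁ → ℍ is slice regular, i.e. f*g ∈ 𝒮ℛ(Ω₁). -/

import Mathlib

open scoped ENNReal NNReal

noncomputable section

/-- The real quaternions. -/
abbrev ℍ := Quaternion ℝ

/-- The set `𝕊` of imaginary units of the quaternions. -/
def QS : Set ℍ := {I | I ^ 2 = -1}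

/-- `Ψ_i^I : ℂ^n → ℂ_I^n ⊆ ℍ^n`, sending `x + y i` to `x + y I` componentwise. -/
def PsiI (n : ℕ) (I : ℍ) (z : Fin n → ℂ) : Fin n → ℍ :=
  fun ℓ => algebraMap ℝ ℍ (z ℓ).re + (z ℓ).im • I

/-- The slice `ℂ_I^n = (ℝ + ℝ I)^n ⊆ ℍ^n`. -/
def sliceCn (n : ℕ) (I : ℍ) : Set (Fin n → ℍ) := Set.range (PsiI n I)

/-- The weakly slice cone `ℍ_s^n = ⋃_{I ∈ 𝕊} ℂ_I^n`. -/
def weakSliceCone (n : ℕ) : Set (Fin n → ℍ) := ⋃ I ∈ QS, sliceCn n I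

/-- `Ω` is slice open (i.e. `Ω ∈ τ_s(ℍ_s^n)`): `Ω ⊆ ℍ_s^n` and each slice
`Ω_I = Ω ∩ ℂ_I^n` is open in `ℂ_I^n`, encoded via the homeomorphism `Ψ_i^I`. -/
def sliceOpen (n : ℕ) (Ω : Set (Fin n → ℍ)) : Prop :=
  Ω ⊆ weakSliceCone n ∧ ∀ I ∈ QS, IsOpen (PsiI n I ⁻¹' Ω)

/-- The set `𝒫(ℂ^n)` of continuous paths `[0,1] → ℂ^n` with real start point,
encoded as functions `ℝ → ℂ^n` continuous on `[0,1]`. -/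
def PathsC (n : ℕ) : Set (ℝ → Fin n → ℂ) :=
  {γ | ContinuousOn γ (Set.Icc 0 1) ∧ ∀ ℓ, (γ 0 ℓ).im = 0}

/-- `γ^I([0,1]) ⊆ Ω`. -/
def pathInSlice (n : ℕ) (Ω : Set (Fin n → ℍ)) (I : ℍ) (γ : ℝ → Fin n → ℂ) : Prop :=
  ∀ t ∈ Set.Icc (0 : ℝ) 1, PsiI n I (γ t) ∈ Ω

/-- The set `𝕊(Ω, γ) = {I ∈ 𝕊 : γ^I ⊆ Ω}`. -/
def sliceUnits (n : ℕ) (Ω : Set (Fin n → ℍ)) (γ : ℝ → Fin n → ℂ) : Set ℍ :=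
  {I | I ∈ QS ∧ pathInSlice n Ω I γ}

/-- The set `𝒫(ℂ^n, Ω)`. -/
def PathsIn (n : ℕ) (Ω : Set (Fin n → ℍ)) : Set (ℝ → Fin n → ℂ) :=
  {γ | γ ∈ PathsC n ∧ ∃ I, I ∈ sliceUnits n Ω γ}

/-- The straight segment `𝓛_z^w(t) = (1 - t)z + tw`. -/
def segPath (n : ℕ) (z w : Fin n → ℂ) : ℝ → Fin n → ℂ :=
  fun t => (1 - t) • z + t • w

/-- Concatenation of paths. -/
def concatP (n : ℕ) (γ δ : ℝ → Fin n → ℂ) : ℝ → Fin n → ℂ :=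
  fun t => if t ≤ 1 / 2 then γ (2 * t) else δ (2 * t - 1)

/-- `𝓛_γ(z) := γ ∘ 𝓛_{γ(1)}^z`, the extension of `γ` by the segment from `γ(1)` to `z`. -/
def extendPath (n : ℕ) (γ : ℝ → Fin n → ℂ) (z : Fin n → ℂ) : ℝ → Fin n → ℂ :=
  concatP n γ (segPath n (γ 1) z)

/-- The ball `B_{𝒫(ℂ^n)}(γ, r)` in path space. -/
def pathBall (n : ℕ) (γ : ℝ → Fin n → ℂ) (r : ℝ) : Set (ℝ → Fin n → ℂ) :=
  {β | ∃ z ∈ Metric.ball (γ 1) r, β = extendPath n γ z}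

/-- `B_I(c^I, r) ⊆ Ω_I`, encoded via `Ψ_i^I`. -/
def ballInSlice (n : ℕ) (Ω : Set (Fin n → ℍ)) (I : ℍ) (c : Fin n → ℂ) (r : ℝ) : Prop :=
  ∀ w ∈ Metric.ball c r, PsiI n I w ∈ Ω

/-- `r_{γ,Ω}`, as an extended nonnegative real. -/
def rPath (n : ℕ) (Ω : Set (Fin n → ℍ)) (γ : ℝ → Fin n → ℂ) : ℝ≥0∞ :=
  sSup {x : ℝ≥0∞ | ∃ r : ℝ≥0, x = r ∧ pathBall n γ r ⊆ PathsIn n Ω}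

/-- `r^{𝕊'}_{γ,Ω}`, as an extended nonnegative real. -/
def rSliceSet (n : ℕ) (Ω : Set (Fin n → ℍ)) (γ : ℝ → Fin n → ℂ) (S' : Set ℍ) : ℝ≥0∞ :=
  sSup {x : ℝ≥0∞ | ∃ r : ℝ≥0, x = r ∧ ∀ I ∈ S', ballInSlice n Ω I (γ 1) r}

/-- `r²_{γ,Ω}`, as an extended nonnegative real. -/
def r2Slice (n : ℕ) (Ω : Set (Fin n → ℍ)) (γ : ℝ → Fin n → ℂ) : ℝ≥0∞ :=
  sSup {x : ℝ≥0∞ | ∃ S'' : Set ℍ, S'' ⊆ sliceUnits n Ω γ ∧ S''.Nontrivial ∧ x = rSliceSet n Ω γ S''}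

/-- `r^I_{γ,Ω}`, as an extended nonnegative real. -/
def rISlice (n : ℕ) (Ω : Set (Fin n → ℍ)) (γ : ℝ → Fin n → ℂ) (I : ℍ) : ℝ≥0∞ :=
  sSup {x : ℝ≥0∞ | ∃ r : ℝ≥0, x = r ∧ ballInSlice n Ω I (γ 1) r}

/-- `Ω` is real-path-connected. -/
def realPathConnected (n : ℕ) (Ω : Set (Fin n → ℍ)) : Prop :=
  ∀ q ∈ Ω, ∃ γ ∈ PathsIn n Ω, ∃ I ∈ sliceUnits n Ω γ, PsiI n I (γ 1) = q

/-- `Ω₂` is `Ω₁`-stem-preserving. -/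
def stemPreserving (n : ℕ) (Ω₁ Ω₂ : Set (Fin n → ℍ)) : Prop :=
  (∀ γ ∈ PathsIn n Ω₁, (sliceUnits n Ω₂ γ).Nontrivial) ∧
  (∀ α ∈ PathsIn n Ω₁, ∀ β ∈ PathsIn n Ω₁, α 1 = β 1 →
    ¬ ∃ I, sliceUnits n Ω₂ α ∩ sliceUnits n Ω₂ β = {I})

/-- `F : 𝒫(ℂ^n, Ω) → ℍ^{2×1}` is a (path-slice) stem function of `f`:
`f(γ^I(1)) = (1, I)·F(γ)`. -/
def isStemOf (n : ℕ) (Ω : Set (Fin n → ℍ)) (f : (Fin n → ℍ) → ℍ)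
    (F : (ℝ → Fin n → ℂ) → ℍ × ℍ) : Prop :=
  ∀ γ ∈ PathsIn n Ω, ∀ I ∈ sliceUnits n Ω γ, f (PsiI n I (γ 1)) = (F γ).1 + I * (F γ).2

/-- `f` is a path-slice function on `Ω`. -/
def PathSliceFn (n : ℕ) (Ω : Set (Fin n → ℍ)) (f : (Fin n → ℍ) → ℍ) : Prop :=
  ∃ F, isStemOf n Ω f F

/-- `f` is (weakly) slice regular on `Ω`: each restriction `f_I` is real differentiable
and satisfies the Cauchy-Riemann equations `(∂/∂x_ℓ + I ∂/∂y_ℓ) f_I = 0`. -/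
def SliceRegular (n : ℕ) (Ω : Set (Fin n → ℍ)) (f : (Fin n → ℍ) → ℍ) : Prop :=
  ∀ I ∈ QS,
    DifferentiableOn ℝ (fun z => f (PsiI n I z)) (PsiI n I ⁻¹' Ω) ∧
    ∀ z ∈ PsiI n I ⁻¹' Ω, ∀ ℓ : Fin n,
      fderivWithin ℝ (fun z => f (PsiI n I z)) (PsiI n I ⁻¹' Ω) z (Pi.single ℓ 1)
        + I * fderivWithin ℝ (fun z => f (PsiI n I z)) (PsiI n I ⁻¹' Ω) z
            (Pi.single ℓ Complex.I) = 0

open Classical in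
/-- `F_{Ω₁}^f` : a choice of stem function of the path-slice function `f : Ω₂ → ℍ`
(its restriction to `𝒫(ℂ^n, Ω₁)` is independent of the choice). -/
def stemF (n : ℕ) (Ω₂ : Set (Fin n → ℍ)) (f : (Fin n → ℍ) → ℍ) :
    (ℝ → Fin n → ℂ) → ℍ × ℍ :=
  if h : ∃ F, isStemOf n Ω₂ f F then h.choose else fun _ => 0

open Classical in
/-- The map `ℑ : ℍ_s^n → 𝕊 ∪ {0}`. -/
def scrI {n : ℕ} (q : Fin n → ℍ) : ℍ :=
  if h : (Finset.univ.filter fun ℓ : Fin n => Quaternion.im (q ℓ) ≠ 0).Nonempty then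
    ‖Quaternion.im (q ((Finset.univ.filter
        fun ℓ : Fin n => Quaternion.im (q ℓ) ≠ 0).min' h))‖⁻¹ •
      Quaternion.im (q ((Finset.univ.filter
        fun ℓ : Fin n => Quaternion.im (q ℓ) ≠ 0).min' h))
  else 0

open Classical in
/-- The map `ℱ_{Ω₁}^g : Ω₁ → ℍ^{2×1}`. -/
def scrF (n : ℕ) (Ω₁ Ω₂ : Set (Fin n → ℍ)) (g : (Fin n → ℍ) → ℍ) (q : Fin n → ℍ) :
    ℍ × ℍ :=
  if h : (∃ ℓ, Quaternion.im (q ℓ) ≠ 0) ∧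
      ∃ γ, γ ∈ PathsIn n Ω₁ ∧ pathInSlice n Ω₁ (scrI q) γ ∧ PsiI n (scrI q) (γ 1) = q then
    stemF n Ω₂ g h.2.choose
  else (g q, 0)

/-- The `*`-product `(f*g)(q) = (f(q), ℑ(q)f(q))·ℱ_{Ω₁}^g(q)`. -/
def starProd (n : ℕ) (Ω₁ Ω₂ : Set (Fin n → ℍ)) (f g : (Fin n → ℍ) → ℍ) :
    (Fin n → ℍ) → ℍ :=
  fun q => f q * (scrF n Ω₁ Ω₂ g q).1 + scrI q * f q * (scrF n Ω₁ Ω₂ g q).2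

/-- Componentwise complex conjugate of a path. -/
def conjPath (n : ℕ) (γ : ℝ → Fin n → ℂ) : ℝ → Fin n → ℂ :=
  fun t ℓ => starRingEnd ℂ (γ t ℓ)

end

/-!
On each slice `ℂ_I^n` a slice regular function is holomorphic for the complex structure on `ℍ` given
by left multiplication by `I`, so the identity theorem is available: two such functions agreeing
on real points agree along every path which starts at a real point. Hence the values of `g` on two
slices `J ≠ K` along a path determine its values on all other slices along that path; solving
`p + J q = g_J`, `p + K q = g_K` gives the stem `(p, q)` of `g`, which satisfies the
Cauchy–Riemann equations `Dp(iv) = -Dq(v)`, `Dq(iv) = Dp(v)`.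

Two paths in one slice of `Ω₁` with the same end point can be joined to a loop, and two units
for that loop in `Ω₂` show that the stem of `g` takes the same value on both paths. So near a point
`f * g` is `f p + I f q` with `(p, q)` computed from two fixed slices of `g`, and the Cauchy–Riemann
equations for `f` and `(p, q)` give the one for `f * g`.
-/

open Filter Topology

/-! ### Identity theorem on complex normed spaces -/

section IdentityTheorem

variable {E F : Type*} [NormedAddCommGroup E] [NormedSpace ℂ E] [NormedAddCommGroup F]
  [NormedSpace ℂ F] [CompleteSpace F] {h : E → F}

theorem eq_zero_on_complex_line_of_frequently_eq_zero {s : Set E} (hso : IsOpen s)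
    (hsc : Convex ℝ s) (hd : DifferentiableOn ℂ h s) {a b : E} {t₀ t : ℂ}
    (ht₀ : a + t₀ • b ∈ s) (ht : a + t • b ∈ s) (h0 : ∃ᶠ τ in 𝓝[≠] t₀, h (a + τ • b) = 0) :
    h (a + t • b) = 0 := by
  let D : Set ℂ := (fun τ : ℂ => a + τ • b) ⁻¹' s
  have hDo : IsOpen D := hso.preimage (by fun_prop)
  have hDc : Convex ℝ D := (hsc.translate_preimage_right a).linear_preimage
    ((LinearMap.toSpanSingleton ℂ E b).restrictScalars ℝ)
  have hdD : DifferentiableOn ℂ (fun τ : ℂ => h (a + τ • b)) D :=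
    hd.comp (by fun_prop) (Set.mapsTo_preimage _ s)
  exact (hdD.analyticOnNhd hDo).eqOn_zero_of_preconnected_of_frequently_eq_zero
    hDc.isPreconnected ht₀ h0 ht

theorem eqOn_zero_of_convex_of_eventuallyEq_zero {s : Set E} (hso : IsOpen s) (hsc : Convex ℝ s)
    (hd : DifferentiableOn ℂ h s) {w : E} (hw : w ∈ s) (h0 : h =ᶠ[𝓝 w] 0) : Set.EqOn h 0 s := by
  intro u hu
  have hline : Tendsto (fun τ : ℂ => w + τ • (u - w)) (𝓝[≠] 0) (𝓝 w) :=
    (Continuous.tendsto' (by fun_prop) _ _ (by simp)).mono_left nhdsWithin_le_nhds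
  simpa using eq_zero_on_complex_line_of_frequently_eq_zero (t₀ := 0) (t := 1) hso hsc hd
    (by simpa using hw) (by simpa using hu) (hline.eventually h0).frequently

theorem eqOn_zero_of_isPreconnected_of_eventuallyEq_zero {U S : Set E} (hU : IsOpen U)
    (hd : DifferentiableOn ℂ h U) (hS : IsPreconnected S) (hSU : S ⊆ U) {w : E} (hw : w ∈ S)
    (h0 : h =ᶠ[𝓝 w] 0) : Set.EqOn h 0 S := by
  suffices hsub : S ⊆ {z | h =ᶠ[𝓝 z] 0} from fun z hz => (hsub hz).eq_of_nhds
  refine hS.subset_of_closure_inter_subset isOpen_setOfPred_eventually_nhds ⟨w, hw, h0⟩ ?_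
  rintro z ⟨hz, hzS⟩
  obtain ⟨r, hr, hball⟩ := Metric.isOpen_iff.1 hU z (hSU hzS)
  obtain ⟨y, hy, hyz⟩ := Metric.mem_closure_iff.1 hz r hr
  have heq : Set.EqOn h 0 (Metric.ball z r) :=
    eqOn_zero_of_convex_of_eventuallyEq_zero Metric.isOpen_ball (convex_ball z r)
      (hd.mono hball) (Metric.mem_ball'.2 hyz) hy
  exact heq.eventuallyEq_of_mem (Metric.ball_mem_nhds z hr)

theorem eventuallyEq_zero_of_eq_zero_on_real {ι : Type*} [Finite ι] {f : (ι → ℂ) → F}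
    {U : Set (ι → ℂ)} (hU : IsOpen U) (hd : DifferentiableOn ℂ f U)
    (h0 : ∀ z ∈ U, (∀ l, (z l).im = 0) → f z = 0) {c : ι → ℂ}
    (hcU : c ∈ U) (hc : ∀ l, (c l).im = 0) : f =ᶠ[𝓝 c] 0 := by
  have := Fintype.ofFinite ι
  obtain ⟨r, hr, hball⟩ := Metric.isOpen_iff.1 hU c hcU
  filter_upwards [Metric.ball_mem_nhds c hr] with u hu
  let x : ι → ℂ := fun l => (u l).re
  let y : ι → ℂ := fun l => (u l).im
  have hxy : x + Complex.I • y = u := funext fun l => by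
    simp only [x, y, Pi.add_apply, Pi.smul_apply, smul_eq_mul, mul_comm Complex.I,
      Complex.re_add_im]
  have hx : x ∈ Metric.ball c r := by
    refine lt_of_le_of_lt ((dist_pi_le_iff dist_nonneg).2 fun l => ?_) (Metric.mem_ball.1 hu)
    have hre : x l - c l = ((u l - c l).re : ℂ) := Complex.ext (by simp [x]) (by simp [x, hc])
    calc dist (x l) (c l) = |(u l - c l).re| := by
          rw [dist_eq_norm, hre, Complex.norm_real, Real.norm_eq_abs]
      _ ≤ dist (u l) (c l) := by rw [dist_eq_norm]; exact Complex.abs_re_le_norm _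
      _ ≤ dist u c := dist_le_pi_dist u c l
  have hreal : ∀ᶠ s : ℝ in 𝓝[≠] 0, f (x + (s : ℂ) • y) = 0 := by
    have hline : Tendsto (fun s : ℝ => x + (s : ℂ) • y) (𝓝[≠] 0) (𝓝 x) :=
      (Continuous.tendsto' (by fun_prop) _ _ (by simp)).mono_left nhdsWithin_le_nhds
    filter_upwards [hline.eventually (Metric.isOpen_ball.mem_nhds hx)] with s hs
    exact h0 _ (hball hs) fun l => by simp [x, y]
  have hofReal : Tendsto ((↑) : ℝ → ℂ) (𝓝[≠] 0) (𝓝[≠] 0) := by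
    simpa using Complex.continuous_ofReal.continuousWithinAt.tendsto_nhdsWithin
      (s := {(0 : ℝ)}ᶜ) (x := 0) (t := {(0 : ℂ)}ᶜ) fun s hs => by simpa using hs
  simpa only [hxy, Pi.zero_apply] using eq_zero_on_complex_line_of_frequently_eq_zero (t₀ := 0)
    (t := Complex.I) Metric.isOpen_ball (convex_ball c r) (hd.mono hball)
    (by simpa using hx) (by rwa [hxy]) (hofReal.frequently hreal.frequently)

theorem eq_zero_at_end_of_eq_zero_on_real {n : ℕ} {f : (Fin n → ℂ) → F} {U : Set (Fin n → ℂ)}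
    (hU : IsOpen U) (hd : DifferentiableOn ℂ f U)
    (h0 : ∀ z ∈ U, (∀ l, (z l).im = 0) → f z = 0) {γ : ℝ → Fin n → ℂ} (hγ : γ ∈ PathsC n)
    (hγU : Set.MapsTo γ (Set.Icc 0 1) U) : f (γ 1) = 0 := by
  have hzero : (0 : ℝ) ∈ Set.Icc (0 : ℝ) 1 := Set.left_mem_Icc.2 zero_le_one
  have hone : (1 : ℝ) ∈ Set.Icc (0 : ℝ) 1 := Set.right_mem_Icc.2 zero_le_one
  exact eqOn_zero_of_isPreconnected_of_eventuallyEq_zero hU hd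
    (isPreconnected_Icc.image γ hγ.1) hγU.image_subset (Set.mem_image_of_mem γ hzero)
    (eventuallyEq_zero_of_eq_zero_on_real hU hd h0 (hγU hzero) hγ.2)
    (Set.mem_image_of_mem γ hone)

end IdentityTheorem

/-! ### Left holomorphic functions and holomorphic stems -/

section LeftHolomorphic

variable {E A : Type*} [NormedAddCommGroup E] [NormedSpace ℂ E] [NormedRing A] [NormedAlgebra ℝ A]
  {K : A} {f g : E → A} {z : E}

/-- `f` is left holomorphic at `z` with respect to `K`: it is real differentiable, and its
derivative turns multiplication by `i` into left multiplication by `K`. For `K * K = -1` this is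
holomorphy for the complex structure on `A` in which `i` acts as `K`. -/
def LeftHolomorphicAt (K : A) (f : E → A) (z : E) : Prop :=
  ∃ L : E →L[ℝ] A, HasFDerivAt f L z ∧ ∀ v, L (Complex.I • v) = K * L v

/-- `F = (F₁, F₂)` is a holomorphic stem at `z`: it is real differentiable and satisfies the
Cauchy–Riemann equations of `F₁ + i F₂`, as a function with values in `A ⊗ ℂ`. -/
def HolomorphicStemAt (F : E → A × A) (z : E) : Prop :=
  ∃ L : E →L[ℝ] A × A, HasFDerivAt F L z ∧ ∀ v, L (Complex.I • v) = (-(L v).2, (L v).1)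

theorem leftHolomorphicAt_const (K c : A) (z : E) : LeftHolomorphicAt K (fun _ => c) z :=
  ⟨0, hasFDerivAt_const c z, by simp⟩

theorem LeftHolomorphicAt.sub (hf : LeftHolomorphicAt K f z) (hg : LeftHolomorphicAt K g z) :
    LeftHolomorphicAt K (fun w => f w - g w) z := by
  obtain ⟨L, hL, hLI⟩ := hf
  obtain ⟨M, hM, hMI⟩ := hg
  exact ⟨L - M, hL.sub hM, fun v => by simp only [sub_apply, hLI, hMI, mul_sub]⟩

theorem LeftHolomorphicAt.congr_of_eventuallyEq (hf : LeftHolomorphicAt K f z)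
    (hgf : g =ᶠ[𝓝 z] f) : LeftHolomorphicAt K g z :=
  let ⟨L, hL, hLI⟩ := hf
  ⟨L, hL.congr_of_eventuallyEq hgf, hLI⟩

theorem LeftHolomorphicAt.mul_stem (hK : K * K = -1) (hf : LeftHolomorphicAt K f z)
    {F : E → A × A} (hF : HolomorphicStemAt F z) :
    LeftHolomorphicAt K (fun w => f w * (F w).1 + K * f w * (F w).2) z := by
  obtain ⟨L, hL, hLI⟩ := hf
  obtain ⟨M, hM, hMI⟩ := hF
  refine ⟨_, (hL.mul' hM.fst).add ((hL.const_mul K).mul' hM.snd), fun v => ?_⟩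
  simp only [add_apply, smul_apply, ContinuousLinearMap.comp_apply,
    ContinuousLinearMap.coe_fst', ContinuousLinearMap.coe_snd', hLI, hMI, smul_eq_mul,
    MulOpposite.smul_eq_mul_unop, MulOpposite.unop_op, mul_add, ← mul_assoc, hK, mul_neg,
    neg_mul, one_mul]
  abel

theorem HolomorphicStemAt.leftHolomorphicAt (hK : K * K = -1) {F : E → A × A}
    (hF : HolomorphicStemAt F z) : LeftHolomorphicAt K (fun w => (F w).1 + K * (F w).2) z := by
  simpa only [one_mul, mul_one] using (leftHolomorphicAt_const K 1 z).mul_stem hK hF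

end LeftHolomorphic

section StemOfSlices

/-- The stem recovered from its values on two slices: the solution `(p, q)` of `p + J q = a`,
`p + K q = b`. -/
def stemOfSlices {D : Type*} [DivisionRing D] (J K a b : D) : D × D :=
  (a - J * ((J - K)⁻¹ * (a - b)), (J - K)⁻¹ * (a - b))

theorem eq_stemOfSlices_iff {D : Type*} [DivisionRing D] {J K a b : D} (hJK : J ≠ K)
    {p : D × D} : p = stemOfSlices J K a b ↔ p.1 + J * p.2 = a ∧ p.1 + K * p.2 = b := by
  have hne : J - K ≠ 0 := sub_ne_zero.2 hJK
  constructor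
  · rintro rfl
    refine ⟨sub_add_cancel _ _, ?_⟩
    calc a - J * ((J - K)⁻¹ * (a - b)) + K * ((J - K)⁻¹ * (a - b))
        = a - (J - K) * ((J - K)⁻¹ * (a - b)) := by rw [sub_mul]; abel
      _ = b := by rw [mul_inv_cancel_left₀ hne, sub_sub_cancel]
  · rintro ⟨rfl, rfl⟩
    have hsnd : (J - K)⁻¹ * (p.1 + J * p.2 - (p.1 + K * p.2)) = p.2 := by
      rw [add_sub_add_left_eq_sub, ← sub_mul, inv_mul_cancel_left₀ hne]
    rw [stemOfSlices, hsnd, add_sub_cancel_right]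

variable {E D : Type*} [NormedAddCommGroup E] [NormedSpace ℂ E] [NormedDivisionRing D]
  [NormedAlgebra ℝ D] {J K : D} {a b : E → D} {z : E}

theorem holomorphicStemAt_stemOfSlices (hJ : J * J = -1) (hK : K * K = -1) (hJK : J ≠ K)
    (ha : LeftHolomorphicAt J a z) (hb : LeftHolomorphicAt K b z) :
    HolomorphicStemAt (fun w => stemOfSlices J K (a w) (b w)) z := by
  obtain ⟨L, hL, hLI⟩ := ha
  obtain ⟨M, hM, hMI⟩ := hb
  have hsnd := (hL.sub hM).const_mul (J - K)⁻¹
  refine ⟨_, (hL.sub (hsnd.const_mul J)).prodMk hsnd, fun v => ?_⟩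
  obtain ⟨hJv, hKv⟩ := (eq_stemOfSlices_iff hJK).1 (rfl : stemOfSlices J K (L v) (M v) = _)
  refine ((eq_stemOfSlices_iff (a := L (Complex.I • v)) (b := M (Complex.I • v)) hJK).2
    ⟨?_, ?_⟩).symm
  · calc -(stemOfSlices J K (L v) (M v)).2 + J * (stemOfSlices J K (L v) (M v)).1
        = J * ((stemOfSlices J K (L v) (M v)).1 + J * (stemOfSlices J K (L v) (M v)).2) := by
          rw [mul_add, ← mul_assoc, hJ, neg_one_mul, add_comm]
      _ = L (Complex.I • v) := by rw [hJv, hLI]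
  · calc -(stemOfSlices J K (L v) (M v)).2 + K * (stemOfSlices J K (L v) (M v)).1
        = K * ((stemOfSlices J K (L v) (M v)).1 + K * (stemOfSlices J K (L v) (M v)).2) := by
          rw [mul_add, ← mul_assoc, hK, neg_one_mul, add_comm]
      _ = M (Complex.I • v) := by rw [hKv, hMI]

end StemOfSlices

/-! ### Imaginary units and slices -/

section ImaginaryUnits

variable {I : ℍ}

theorem mul_self_of_mem_QS (hI : I ∈ QS) : I * I = -1 := (pow_two I).symm.trans hI

theorem neg_mem_QS (hI : I ∈ QS) : -I ∈ QS := (neg_sq I).trans hI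

theorem norm_of_mem_QS (hI : I ∈ QS) : ‖I‖ = 1 := by
  have hsq : ‖I‖ ^ 2 = 1 := by
    rw [← norm_pow, show I ^ 2 = -1 from hI, norm_neg, norm_one]
  exact (pow_eq_one_iff_of_nonneg (norm_nonneg I) two_ne_zero).1 hsq

theorem ne_zero_of_mem_QS (hI : I ∈ QS) : I ≠ 0 :=
  norm_ne_zero_iff.1 ((norm_of_mem_QS hI).trans_ne one_ne_zero)

theorem re_of_mem_QS (hI : I ∈ QS) : I.re = 0 := by
  rw [← Quaternion.sq_eq_neg_normSq, Quaternion.normSq_eq_norm_mul_self, norm_of_mem_QS hI,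
    show I ^ 2 = -1 from hI]
  simp

theorem norm_lift_of_mem_QS (hI : I ∈ QS) (c : ℂ) :
    ‖Complex.lift ⟨I, mul_self_of_mem_QS hI⟩ c‖ = ‖c‖ := by
  have hnormSq : I.imI ^ 2 + I.imJ ^ 2 + I.imK ^ 2 = 1 := by
    have hI' := Quaternion.normSq_eq_norm_mul_self I
    rw [Quaternion.normSq_def', norm_of_mem_QS hI, re_of_mem_QS hI] at hI'
    linarith
  rw [← sq_eq_sq₀ (norm_nonneg _) (norm_nonneg _), pow_two,
    ← Quaternion.normSq_eq_norm_mul_self, Quaternion.normSq_def', Complex.sq_norm,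
    Complex.normSq_apply]
  simp only [Complex.lift_apply, Complex.liftAux_apply, Quaternion.algebraMap_def,
    Quaternion.re_add, Quaternion.re_coe, Quaternion.re_smul, re_of_mem_QS hI, smul_eq_mul,
    mul_zero, add_zero, Quaternion.imI_add, Quaternion.imI_coe, Quaternion.imI_smul, zero_add,
    Quaternion.imJ_add, Quaternion.imJ_coe, Quaternion.imJ_smul, Quaternion.imK_add,
    Quaternion.imK_coe, Quaternion.imK_smul]
  linear_combination c.im ^ 2 * hnormSq

/-- The complex normed space `ℍ` in which `i` acts as left multiplication by the imaginary
unit `I`. -/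
noncomputable abbrev leftComplexSpace (hI : I ∈ QS) : NormedSpace ℂ ℍ :=
  let θ : ℂ →ₐ[ℝ] ℍ := Complex.lift ⟨I, mul_self_of_mem_QS hI⟩
  { Module.compHom ℍ (θ : ℂ →+* ℍ) with
    norm_smul_le := fun c q =>
      (norm_mul_le (θ c) q).trans_eq (congrArg (· * ‖q‖) (norm_lift_of_mem_QS hI c)) }

theorem LeftHolomorphicAt.differentiableAt {E : Type*} [NormedAddCommGroup E] [NormedSpace ℂ E]
    (hI : I ∈ QS) {f : E → ℍ} {z : E} (hf : LeftHolomorphicAt I f z) :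
    letI := leftComplexSpace hI
    DifferentiableAt ℂ f z := by
  let := leftComplexSpace hI
  have hsmul (c : ℂ) (q : ℍ) : c • q = c.re • q + c.im • (I * q) := by
    change Complex.lift ⟨I, mul_self_of_mem_QS hI⟩ c * q = _
    rw [Complex.lift_apply, Complex.liftAux_apply, add_mul, smul_mul_assoc, ← Algebra.smul_def]
  have : IsScalarTower ℝ ℂ ℍ := ⟨fun r c q => by
    simp only [hsmul, Complex.smul_re, Complex.smul_im, smul_add, smul_assoc]⟩
  obtain ⟨L, hL, hLI⟩ := hf
  have hLsmul (c : ℂ) (v : E) : L (c • v) = c • L v := by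
    have hcv : c • v = c.re • v + c.im • Complex.I • v := by
      conv_lhs => rw [← Complex.re_add_im c]
      simp only [add_smul, mul_smul, Complex.coe_smul]
    rw [hcv, map_add, map_smul, map_smul, hLI, hsmul]
  exact (hasFDerivAt_of_restrictScalars ℝ (f' := { L with map_smul' := hLsmul }) hL
    rfl).differentiableAt

end ImaginaryUnits

section Slices

variable {n : ℕ} {I J : ℍ} {z w : Fin n → ℂ}

theorem PsiI_apply_im (hI : I ∈ QS) (z : Fin n → ℂ) (l : Fin n) :
    (PsiI n I z l).im = (z l).im • I := by
  ext <;> simp [PsiI, re_of_mem_QS hI]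

theorem PsiI_apply_im_eq_zero_iff (hI : I ∈ QS) {l : Fin n} :
    (PsiI n I z l).im = 0 ↔ (z l).im = 0 := by
  simp only [PsiI_apply_im hI, smul_eq_zero, ne_zero_of_mem_QS hI, or_false]

theorem PsiI_injective (hI : I ∈ QS) : Function.Injective (PsiI n I) := by
  intro z w h
  funext l
  apply Complex.ext
  · simpa [PsiI, re_of_mem_QS hI] using congrArg (·.re) (congrFun h l)
  · have him := congrArg Quaternion.im (congrFun h l)
    rw [PsiI_apply_im hI, PsiI_apply_im hI] at him
    exact smul_left_injective ℝ (ne_zero_of_mem_QS hI) him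

theorem PsiI_eq_of_im_eq_zero (I J : ℍ) (hz : ∀ l, (z l).im = 0) : PsiI n I z = PsiI n J z := by
  funext l
  simp [PsiI, hz]

theorem PsiI_neg_conjPath (I : ℍ) (γ : ℝ → Fin n → ℂ) (t : ℝ) :
    PsiI n (-I) (conjPath n γ t) = PsiI n I (γ t) := by
  funext l
  simp [PsiI, conjPath]

theorem exists_scrI_eq_normalize {q : Fin n → ℍ} (hq : ∃ l, (q l).im ≠ 0) :
    ∃ l, (q l).im ≠ 0 ∧ scrI q = NormedSpace.normalize (q l).im := by
  classical
  have hne : (Finset.univ.filter fun l => (q l).im ≠ 0).Nonempty := by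
    simpa [Finset.filter_nonempty_iff] using hq
  refine ⟨_, (Finset.mem_filter.1 (Finset.min'_mem _ hne)).2, ?_⟩
  rw [scrI, dif_pos (by convert hne)]
  unfold NormedSpace.normalize
  congr!

theorem scrI_PsiI_eq_or_eq_neg (hI : I ∈ QS) (hz : ∃ l, (z l).im ≠ 0) :
    scrI (PsiI n I z) = I ∨ scrI (PsiI n I z) = -I := by
  obtain ⟨l, hl, hscr⟩ := exists_scrI_eq_normalize
    (hz.imp fun l => (PsiI_apply_im_eq_zero_iff hI).not.2)
  rw [hscr, PsiI_apply_im hI]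
  rcases lt_or_gt_of_ne ((PsiI_apply_im_eq_zero_iff hI).not.1 hl) with hneg | hpos
  · exact .inr (by rw [NormedSpace.normalize_smul_of_neg hneg,
      NormedSpace.normalize_eq_self_of_norm_eq_one (norm_of_mem_QS hI)])
  · exact .inl (by rw [NormedSpace.normalize_smul_of_pos hpos,
      NormedSpace.normalize_eq_self_of_norm_eq_one (norm_of_mem_QS hI)])

theorem eq_or_eq_neg_of_PsiI_eq (hI : I ∈ QS) (hJ : J ∈ QS) (hz : ∃ l, (z l).im ≠ 0)
    (h : PsiI n J w = PsiI n I z) : J = I ∨ J = -I := by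
  have hw : ∃ l, (w l).im ≠ 0 := hz.imp fun l hl => by
    rwa [ne_eq, ← PsiI_apply_im_eq_zero_iff hJ, h, PsiI_apply_im_eq_zero_iff hI]
  rcases h ▸ scrI_PsiI_eq_or_eq_neg hJ hw with hJ' | hJ' <;>
    rcases scrI_PsiI_eq_or_eq_neg hI hz with hI' | hI' <;> rw [hI'] at hJ'
  · exact .inl hJ'.symm
  · exact .inr hJ'.symm
  · exact .inr (neg_eq_iff_eq_neg.1 hJ'.symm)
  · exact .inl (neg_injective hJ').symm

end Slices

/-! ### Slice regularity as left holomorphy on slices -/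

theorem leftLinear_iff_cauchyRiemann {ι A : Type*} [Finite ι] [DecidableEq ι] [Ring A]
    [Algebra ℝ A] {K : A} (hK : K * K = -1) (L : (ι → ℂ) →ₗ[ℝ] A) :
    (∀ v, L (Complex.I • v) = K * L v) ↔
      ∀ l, L (Pi.single l 1) + K * L (Pi.single l Complex.I) = 0 := by
  have hI_smul (l : ι) (c : ℂ) :
      Complex.I • (Pi.single l c : ι → ℂ) = Pi.single l (Complex.I * c) :=
    by rw [← smul_eq_mul, Pi.single_smul]
  constructor
  · intro h l
    rw [← mul_one Complex.I, ← hI_smul, h, ← mul_assoc, hK, neg_one_mul, add_neg_cancel]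
  · intro h v
    have hone (l : ι) : L (Pi.single l 1) = -(K * L (Pi.single l Complex.I)) :=
      eq_neg_of_add_eq_zero_left (h l)
    suffices heq : L ∘ₗ (LinearMap.lsmul ℂ (ι → ℂ) Complex.I).restrictScalars ℝ
        = LinearMap.mulLeft ℝ K ∘ₗ L from LinearMap.congr_fun heq v
    refine LinearMap.pi_ext' fun l => Complex.basisOneI.ext fun i => ?_
    fin_cases i
    · simp [hI_smul, hone, ← mul_assoc, hK]
    · simp [hI_smul, hone, Pi.single_neg]

theorem sliceRegular_iff_leftHolomorphicAt {n : ℕ} {Ω : Set (Fin n → ℍ)} (hΩ : sliceOpen n Ω)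
    {f : (Fin n → ℍ) → ℍ} :
    SliceRegular n Ω f ↔ ∀ I ∈ QS, ∀ z ∈ PsiI n I ⁻¹' Ω,
      LeftHolomorphicAt I (fun w => f (PsiI n I w)) z := by
  refine forall₂_congr fun I hI => ?_
  have hopen := hΩ.2 I hI
  constructor
  · rintro ⟨hd, hcr⟩ z hz
    refine ⟨_, ((hd z hz).differentiableAt (hopen.mem_nhds hz)).hasFDerivAt, ?_⟩
    rw [← fderivWithin_of_isOpen hopen hz]
    exact (leftLinear_iff_cauchyRiemann (mul_self_of_mem_QS hI) (fderivWithin ..).toLinearMap).2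
      (hcr z hz)
  · intro hf
    refine ⟨fun z hz => ?_, fun z hz => ?_⟩ <;> obtain ⟨L, hL, hLI⟩ := hf z hz
    · exact hL.differentiableAt.differentiableWithinAt
    · rw [fderivWithin_of_isOpen hopen hz, hL.fderiv]
      exact (leftLinear_iff_cauchyRiemann (mul_self_of_mem_QS hI) L.toLinearMap).1 hLI

/-! ### Paths -/

section Paths

variable {n : ℕ} {Ω : Set (Fin n → ℍ)} {I : ℍ} {α β γ : ℝ → Fin n → ℂ}

theorem continuousOn_concatP (hα : ContinuousOn α (Set.Icc 0 1))
    (hβ : ContinuousOn β (Set.Icc 0 1)) (h : α 1 = β 0) :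
    ContinuousOn (concatP n α β) (Set.Icc 0 1) := by
  have hle : {t : ℝ | t ≤ 1 / 2} = Set.Iic (1 / 2) := rfl
  have hnot : {t : ℝ | ¬ t ≤ 1 / 2} = Set.Ioi (1 / 2) := Set.ext fun t => not_le
  refine ContinuousOn.if ?_ ?_ ?_
  · rintro t ⟨-, ht⟩
    rw [hle, frontier_Iic, Set.mem_singleton_iff] at ht
    subst ht
    norm_num [h]
  · rw [hle, closure_Iic]
    exact hα.comp (by fun_prop) fun t ht =>
      ⟨by linarith [ht.1.1], by linarith [Set.mem_Iic.1 ht.2]⟩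
  · rw [hnot, closure_Ioi]
    exact hβ.comp (by fun_prop) fun t ht =>
      ⟨by linarith [Set.mem_Ici.1 ht.2], by linarith [ht.1.2]⟩

theorem concatP_mem_PathsC (hα : α ∈ PathsC n) (hβ : ContinuousOn β (Set.Icc 0 1))
    (h : α 1 = β 0) : concatP n α β ∈ PathsC n :=
  ⟨continuousOn_concatP hα.1 hβ h, by simpa [concatP] using hα.2⟩

theorem pathInSlice_concatP (h : α 1 = β 0) :
    pathInSlice n Ω I (concatP n α β) ↔ pathInSlice n Ω I α ∧ pathInSlice n Ω I β := by
  constructor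
  · refine fun hαβ => ⟨fun t ht => ?_, fun t ht => ?_⟩
    · have hmem := hαβ (t / 2) ⟨by linarith [ht.1], by linarith [ht.2]⟩
      have hle : t / 2 ≤ 1 / 2 := by linarith [ht.2]
      rwa [concatP, if_pos hle, mul_div_cancel₀ _ two_ne_zero] at hmem
    · have hmem := hαβ ((t + 1) / 2) ⟨by linarith [ht.1], by linarith [ht.2]⟩
      rcases ht.1.eq_or_lt with rfl | hpos
      · simpa [concatP, h] using hmem
      · have hgt : ¬ (t + 1) / 2 ≤ 1 / 2 := by linarith
        rwa [concatP, if_neg hgt, mul_div_cancel₀ _ two_ne_zero, add_sub_cancel_right] at hmem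
  · rintro ⟨hα, hβ⟩ t ht
    unfold concatP
    split_ifs with hle
    · exact hα _ ⟨by linarith [ht.1], by linarith⟩
    · exact hβ _ ⟨by linarith, by linarith [ht.2]⟩

theorem sliceUnits_concatP (h : α 1 = β 0) :
    sliceUnits n Ω (concatP n α β) = sliceUnits n Ω α ∩ sliceUnits n Ω β := by
  ext J
  simp only [sliceUnits, Set.mem_ofPred_eq, Set.mem_inter_iff, pathInSlice_concatP h]
  tauto

/-- The path `β` traversed backwards. -/
def reversePath (n : ℕ) (β : ℝ → Fin n → ℂ) : ℝ → Fin n → ℂ := fun t => β (1 - t)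

theorem continuousOn_reversePath (hβ : ContinuousOn β (Set.Icc 0 1)) :
    ContinuousOn (reversePath n β) (Set.Icc 0 1) :=
  hβ.comp (by fun_prop) fun _ => Set.Icc.one_sub_mem

theorem pathInSlice_reversePath :
    pathInSlice n Ω I (reversePath n β) ↔ pathInSlice n Ω I β := by
  refine ⟨fun h t ht => ?_, fun h t ht => h _ (Set.Icc.one_sub_mem ht)⟩
  simpa only [reversePath, sub_sub_cancel] using h _ (Set.Icc.one_sub_mem ht)

theorem conjPath_mem_PathsC (hγ : γ ∈ PathsC n) : conjPath n γ ∈ PathsC n := by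
  refine ⟨?_, fun l => by simp [conjPath, hγ.2 l]⟩
  have hconj : Continuous fun z : Fin n → ℂ => fun l => starRingEnd ℂ (z l) := by fun_prop
  exact hconj.comp_continuousOn hγ.1

theorem pathInSlice_neg_conjPath :
    pathInSlice n Ω (-I) (conjPath n γ) ↔ pathInSlice n Ω I γ := by
  simp only [pathInSlice, PsiI_neg_conjPath]

theorem exists_path_in_slice (hΩ : realPathConnected n Ω) (hI : I ∈ QS) {z : Fin n → ℂ}
    (hz : PsiI n I z ∈ Ω) : ∃ α ∈ PathsC n, pathInSlice n Ω I α ∧ α 1 = z := by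
  by_cases hreal : ∀ l, (z l).im = 0
  · exact ⟨fun _ => z, ⟨continuousOn_const, hreal⟩, fun _ _ => hz, rfl⟩
  push Not at hreal
  obtain ⟨γ, hγ, J, ⟨hJ, hJγ⟩, hend⟩ := hΩ _ hz
  rcases eq_or_eq_neg_of_PsiI_eq hI hJ hreal hend with rfl | rfl
  · exact ⟨γ, hγ.1, hJγ, PsiI_injective hI hend⟩
  · refine ⟨conjPath n γ, conjPath_mem_PathsC hγ.1, ?_, PsiI_injective hI ?_⟩
    · simpa only [neg_neg] using pathInSlice_neg_conjPath.2 hJγ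
    · rw [← hend, ← PsiI_neg_conjPath (-I) γ 1, neg_neg]

theorem segPath_zero (z w : Fin n → ℂ) : segPath n z w 0 = z := by simp [segPath]

theorem extendPath_one (γ : ℝ → Fin n → ℂ) (w : Fin n → ℂ) : extendPath n γ w 1 = w := by
  norm_num [extendPath, concatP, segPath]

theorem extendPath_mem_PathsC (hγ : γ ∈ PathsC n) (w : Fin n → ℂ) :
    extendPath n γ w ∈ PathsC n := by
  refine concatP_mem_PathsC hγ (Continuous.continuousOn ?_) (segPath_zero _ _).symm
  unfold segPath
  fun_prop

theorem eventually_pathInSlice_extendPath (hΩ : IsOpen (PsiI n I ⁻¹' Ω))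
    (hγ : pathInSlice n Ω I γ) : ∀ᶠ w in 𝓝 (γ 1), pathInSlice n Ω I (extendPath n γ w) := by
  obtain ⟨r, hr, hball⟩ :=
    Metric.isOpen_iff.1 hΩ (γ 1) (hγ 1 (Set.right_mem_Icc.2 zero_le_one))
  filter_upwards [Metric.ball_mem_nhds _ hr] with w hw
  refine (pathInSlice_concatP (segPath_zero _ _).symm).2 ⟨hγ, fun t ht => hball ?_⟩
  exact convex_ball (γ 1) r (Metric.mem_ball_self hr) hw (sub_nonneg.2 ht.2) ht.1
    (sub_add_cancel 1 t)

theorem eventually_mem_sliceUnits_extendPath (hΩ : sliceOpen n Ω) (hI : I ∈ sliceUnits n Ω γ) :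
    ∀ᶠ w in 𝓝 (γ 1), I ∈ sliceUnits n Ω (extendPath n γ w) :=
  (eventually_pathInSlice_extendPath (hΩ.2 I hI.1) hI.2).mono fun _ hw => ⟨hI.1, hw⟩

end Paths

/-! ### Stem functions -/

section Stems

variable {n : ℕ} {Ω Ω₁ Ω₂ : Set (Fin n → ℍ)} {f g : (Fin n → ℍ) → ℍ}
  {F : (ℝ → Fin n → ℂ) → ℍ × ℍ} {I J K : ℍ} {α β γ : ℝ → Fin n → ℂ}

theorem SliceRegular.representation_formula (hΩ : sliceOpen n Ω) (hg : SliceRegular n Ω g)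
    (hγ : γ ∈ PathsC n) (hI : I ∈ sliceUnits n Ω γ) (hJ : J ∈ sliceUnits n Ω γ)
    (hK : K ∈ sliceUnits n Ω γ) (hJK : J ≠ K) :
    g (PsiI n I (γ 1)) = (stemOfSlices J K (g (PsiI n J (γ 1))) (g (PsiI n K (γ 1)))).1 +
      I * (stemOfSlices J K (g (PsiI n J (γ 1))) (g (PsiI n K (γ 1)))).2 := by
  have hholo := (sliceRegular_iff_leftHolomorphicAt hΩ).1 hg
  let F := fun w : Fin n → ℂ => stemOfSlices J K (g (PsiI n J w)) (g (PsiI n K w))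
  let U := PsiI n I ⁻¹' Ω ∩ (PsiI n J ⁻¹' Ω ∩ PsiI n K ⁻¹' Ω)
  have hU : IsOpen U := (hΩ.2 I hI.1).inter ((hΩ.2 J hJ.1).inter (hΩ.2 K hK.1))
  let := leftComplexSpace hI.1
  have hd : DifferentiableOn ℂ (fun w => g (PsiI n I w) - ((F w).1 + I * (F w).2)) U := by
    rintro z ⟨hzI, hzJ, hzK⟩
    have hF : HolomorphicStemAt F z :=
      holomorphicStemAt_stemOfSlices (mul_self_of_mem_QS hJ.1) (mul_self_of_mem_QS hK.1) hJK
        (hholo J hJ.1 z hzJ) (hholo K hK.1 z hzK)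
    exact (((hholo I hI.1 z hzI).sub (hF.leftHolomorphicAt
      (mul_self_of_mem_QS hI.1))).differentiableAt hI.1).differentiableWithinAt
  have hreal : ∀ z ∈ U, (∀ l, (z l).im = 0) →
      g (PsiI n I z) - ((F z).1 + I * (F z).2) = 0 := by
    intro z _ hz
    have hF : (g (PsiI n I z), 0) = F z := (eq_stemOfSlices_iff hJK).2
      (by simp [PsiI_eq_of_im_eq_zero J I hz, PsiI_eq_of_im_eq_zero K I hz])
    rw [← hF, mul_zero, add_zero, sub_self]
  exact sub_eq_zero.1 (eq_zero_at_end_of_eq_zero_on_real hU hd hreal hγ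
    fun t ht => ⟨hI.2 t ht, hJ.2 t ht, hK.2 t ht⟩)

theorem SliceRegular.pathSliceFn (hΩ : sliceOpen n Ω) (hg : SliceRegular n Ω g) :
    PathSliceFn n Ω g := by
  have hstem (γ : ℝ → Fin n → ℂ) : ∃ p : ℍ × ℍ, γ ∈ PathsIn n Ω →
      ∀ I ∈ sliceUnits n Ω γ, g (PsiI n I (γ 1)) = p.1 + I * p.2 := by
    rcases (sliceUnits n Ω γ).subsingleton_or_nontrivial with hsub | ⟨J, hJ, K, hK, hJK⟩
    · refine ⟨(g (PsiI n (Classical.epsilon (· ∈ sliceUnits n Ω γ)) (γ 1)), 0),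
        fun _ I hI => ?_⟩
      rw [hsub (Classical.epsilon_spec ⟨I, hI⟩) hI, mul_zero, add_zero]
    · exact ⟨_, fun hγ I hI => hg.representation_formula hΩ hγ.1 hI hJ hK hJK⟩
  choose F hF using hstem
  exact ⟨F, hF⟩

theorem PathSliceFn.isStemOf_stemF (hg : PathSliceFn n Ω g) : isStemOf n Ω g (stemF n Ω g) := by
  unfold PathSliceFn at hg
  rw [stemF, dif_pos hg]
  exact hg.choose_spec

theorem isStemOf.eq_stemOfSlices (hF : isStemOf n Ω g F) (hγ : γ ∈ PathsC n)
    (hJ : J ∈ sliceUnits n Ω γ) (hK : K ∈ sliceUnits n Ω γ) (hJK : J ≠ K) :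
    F γ = stemOfSlices J K (g (PsiI n J (γ 1))) (g (PsiI n K (γ 1))) :=
  (eq_stemOfSlices_iff hJK).2
    ⟨(hF γ ⟨hγ, J, hJ⟩ J hJ).symm, (hF γ ⟨hγ, J, hJ⟩ K hK).symm⟩

theorem isStemOf.eq_of_forall_mem (hF : isStemOf n Ω g F) (hγ : γ ∈ PathsC n) {S : Set ℍ}
    (hS : S.Nontrivial) (hSγ : S ⊆ sliceUnits n Ω γ) {p : ℍ × ℍ}
    (h : ∀ J ∈ S, g (PsiI n J (γ 1)) = p.1 + J * p.2) : F γ = p := by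
  obtain ⟨J, hJ, K, hK, hJK⟩ := hS
  rw [hF.eq_stemOfSlices hγ (hSγ hJ) (hSγ hK) hJK]
  exact ((eq_stemOfSlices_iff hJK).2 ⟨(h J hJ).symm, (h K hK).symm⟩).symm

theorem isStemOf.eq_of_real_end (hF : isStemOf n Ω g F) (hγ : γ ∈ PathsC n)
    (hunits : (sliceUnits n Ω γ).Nontrivial) (hreal : ∀ l, (γ 1 l).im = 0) (I : ℍ) :
    F γ = (g (PsiI n I (γ 1)), 0) :=
  hF.eq_of_forall_mem hγ hunits subset_rfl fun J _ => by
    rw [mul_zero, add_zero, PsiI_eq_of_im_eq_zero J I hreal]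

theorem isStemOf.apply_conjPath (hF : isStemOf n Ω g F) (hγ : γ ∈ PathsC n)
    (hunits : (sliceUnits n Ω γ).Nontrivial) : F (conjPath n γ) = ((F γ).1, -(F γ).2) := by
  refine hF.eq_of_forall_mem (conjPath_mem_PathsC hγ) (hunits.image neg_injective) ?_ ?_
  · rintro _ ⟨J, hJ, rfl⟩
    exact ⟨neg_mem_QS hJ.1, pathInSlice_neg_conjPath.2 hJ.2⟩
  · rintro _ ⟨J, hJ, rfl⟩
    rw [PsiI_neg_conjPath, hF γ ⟨hγ, J, hJ⟩ J hJ, neg_mul_neg]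

theorem isStemOf.eq_of_same_end (hF : isStemOf n Ω₂ g F)
    (hunits : ∀ γ ∈ PathsIn n Ω₁, (sliceUnits n Ω₂ γ).Nontrivial) (hI : I ∈ QS)
    (hα : α ∈ PathsC n) (hαI : pathInSlice n Ω₁ I α) (hβ : β ∈ PathsC n)
    (hβI : pathInSlice n Ω₁ I β) (h : α 1 = β 1) : F α = F β := by
  have hjoin : α 1 = reversePath n β 0 := by rw [h, reversePath, sub_zero]
  have hloop : concatP n α (reversePath n β) ∈ PathsIn n Ω₁ :=
    ⟨concatP_mem_PathsC hα (continuousOn_reversePath hβ.1) hjoin, I, hI,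
      (pathInSlice_concatP hjoin).2 ⟨hαI, pathInSlice_reversePath.2 hβI⟩⟩
  have hnontrivial := hunits _ hloop
  rw [sliceUnits_concatP hjoin] at hnontrivial
  refine hF.eq_of_forall_mem hα hnontrivial Set.inter_subset_left fun J hJ => ?_
  have hJβ : J ∈ sliceUnits n Ω₂ β := ⟨hJ.2.1, pathInSlice_reversePath.1 hJ.2.2⟩
  rw [h, hF β ⟨hβ, J, hJβ⟩ J hJβ]

end Stems

/-! ### The `*`-product -/

section StarProduct

variable {n : ℕ} {Ω₁ Ω₂ : Set (Fin n → ℍ)} {f g : (Fin n → ℍ) → ℍ} {I J K : ℍ}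
  {α : ℝ → Fin n → ℂ}

theorem scrF_of_real {q : Fin n → ℍ} (hq : ∀ l, (q l).im = 0) :
    scrF n Ω₁ Ω₂ g q = (g q, 0) :=
  dif_neg fun h => h.1.elim fun l hl => hl (hq l)

theorem scrF_PsiI_of_scrI_eq (hF : isStemOf n Ω₂ g (stemF n Ω₂ g))
    (hunits : ∀ γ ∈ PathsIn n Ω₁, (sliceUnits n Ω₂ γ).Nontrivial) (hI : I ∈ QS)
    (hα : α ∈ PathsC n) (hαI : pathInSlice n Ω₁ I α) (hreal : ∃ l, (α 1 l).im ≠ 0)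
    (hscr : scrI (PsiI n I (α 1)) = I) :
    scrF n Ω₁ Ω₂ g (PsiI n I (α 1)) = stemF n Ω₂ g α := by
  have hex : (∃ l, (PsiI n I (α 1) l).im ≠ 0) ∧ ∃ γ, γ ∈ PathsIn n Ω₁ ∧
      pathInSlice n Ω₁ (scrI (PsiI n I (α 1))) γ ∧
        PsiI n (scrI (PsiI n I (α 1))) (γ 1) = PsiI n I (α 1) :=
    ⟨hreal.imp fun _ => (PsiI_apply_im_eq_zero_iff hI).not.2, α, ⟨hα, I, hI, hαI⟩,
      by rwa [hscr], by rw [hscr]⟩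
  have hstem : ∀ γ ∈ PathsIn n Ω₁, pathInSlice n Ω₁ (scrI (PsiI n I (α 1))) γ →
      PsiI n (scrI (PsiI n I (α 1))) (γ 1) = PsiI n I (α 1) →
        stemF n Ω₂ g γ = stemF n Ω₂ g α := by
    rw [hscr]
    exact fun γ hγ hγI hend =>
      hF.eq_of_same_end hunits hI hγ.1 hγI hα hαI (PsiI_injective hI hend)
  obtain ⟨hγ, hγI, hend⟩ := hex.2.choose_spec
  rw [scrF, dif_pos hex]
  exact hstem _ hγ hγI hend

theorem starProd_PsiI_eq (hF : isStemOf n Ω₂ g (stemF n Ω₂ g))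
    (hunits : ∀ γ ∈ PathsIn n Ω₁, (sliceUnits n Ω₂ γ).Nontrivial) (hI : I ∈ QS)
    (hα : α ∈ PathsC n) (hαI : pathInSlice n Ω₁ I α) :
    starProd n Ω₁ Ω₂ f g (PsiI n I (α 1)) = f (PsiI n I (α 1)) * (stemF n Ω₂ g α).1 +
      I * f (PsiI n I (α 1)) * (stemF n Ω₂ g α).2 := by
  have hαunits := hunits α ⟨hα, I, hI, hαI⟩
  by_cases hreal : ∀ l, (α 1 l).im = 0
  · have him (l : Fin n) : (PsiI n I (α 1) l).im = 0 :=
      (PsiI_apply_im_eq_zero_iff hI).2 (hreal l)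
    rw [starProd, scrF_of_real him, hF.eq_of_real_end hα hαunits hreal I, mul_zero, mul_zero]
  push Not at hreal
  rcases scrI_PsiI_eq_or_eq_neg hI hreal with hscr | hscr
  · rw [starProd, scrF_PsiI_of_scrI_eq hF hunits hI hα hαI hreal hscr, hscr]
  · have hconj : PsiI n (-I) (conjPath n α 1) = PsiI n I (α 1) := PsiI_neg_conjPath I α 1
    have hscrF : scrF n Ω₁ Ω₂ g (PsiI n I (α 1)) = stemF n Ω₂ g (conjPath n α) := by
      rw [← hconj]
      exact scrF_PsiI_of_scrI_eq hF hunits (neg_mem_QS hI) (conjPath_mem_PathsC hα)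
        (pathInSlice_neg_conjPath.2 hαI) (by simpa [conjPath] using hreal) (by rw [hconj, hscr])
    rw [starProd, hscrF, hF.apply_conjPath hα hαunits, hscr, neg_mul, neg_mul_neg]

theorem eventually_starProd_PsiI_eq (hΩ₁ : sliceOpen n Ω₁) (hΩ₂ : sliceOpen n Ω₂)
    (hF : isStemOf n Ω₂ g (stemF n Ω₂ g))
    (hunits : ∀ γ ∈ PathsIn n Ω₁, (sliceUnits n Ω₂ γ).Nontrivial) (hα : α ∈ PathsC n)
    (hI : I ∈ sliceUnits n Ω₁ α) (hJ : J ∈ sliceUnits n Ω₂ α) (hK : K ∈ sliceUnits n Ω₂ α)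
    (hJK : J ≠ K) :
    ∀ᶠ w in 𝓝 (α 1), starProd n Ω₁ Ω₂ f g (PsiI n I w) =
      f (PsiI n I w) * (stemOfSlices J K (g (PsiI n J w)) (g (PsiI n K w))).1 +
        I * f (PsiI n I w) * (stemOfSlices J K (g (PsiI n J w)) (g (PsiI n K w))).2 := by
  filter_upwards [eventually_mem_sliceUnits_extendPath hΩ₁ hI,
    eventually_mem_sliceUnits_extendPath hΩ₂ hJ, eventually_mem_sliceUnits_extendPath hΩ₂ hK]
    with w hwI hwJ hwK
  have hw := extendPath_mem_PathsC hα w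
  simpa only [hF.eq_stemOfSlices hw hwJ hwK hJK, extendPath_one] using
    starProd_PsiI_eq (f := f) hF hunits hI.1 hw hwI.2

end StarProduct

theorem statement7_general {n : ℕ} {Ω₁ Ω₂ : Set (Fin n → ℍ)} (hΩ₁ : sliceOpen n Ω₁)
    (hrc : realPathConnected n Ω₁) (hΩ₂ : sliceOpen n Ω₂)
    (hunits : ∀ γ ∈ PathsIn n Ω₁, (sliceUnits n Ω₂ γ).Nontrivial)
    {f g : (Fin n → ℍ) → ℍ} (hf : SliceRegular n Ω₁ f) (hg : SliceRegular n Ω₂ g) :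
    SliceRegular n Ω₁ (starProd n Ω₁ Ω₂ f g) := by
  have hF := (hg.pathSliceFn hΩ₂).isStemOf_stemF
  rw [sliceRegular_iff_leftHolomorphicAt hΩ₁] at hf ⊢
  rw [sliceRegular_iff_leftHolomorphicAt hΩ₂] at hg
  intro I hI z hz
  obtain ⟨α, hα, hαI, rfl⟩ := exists_path_in_slice hrc hI hz
  obtain ⟨J, hJ, K, hK, hJK⟩ := hunits α ⟨hα, I, hI, hαI⟩
  have hone : (1 : ℝ) ∈ Set.Icc (0 : ℝ) 1 := Set.right_mem_Icc.2 zero_le_one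
  have hstem := holomorphicStemAt_stemOfSlices (mul_self_of_mem_QS hJ.1)
    (mul_self_of_mem_QS hK.1) hJK (hg J hJ.1 _ (hJ.2 1 hone)) (hg K hK.1 _ (hK.2 1 hone))
  exact ((hf I hI _ hz).mul_stem (mul_self_of_mem_QS hI) hstem).congr_of_eventuallyEq
    (eventually_starProd_PsiI_eq hΩ₁ hΩ₂ hF hunits hα ⟨hI, hαI⟩ hJ hK hJK)

theorem statement7 (n : ℕ) (hn : 1 ≤ n) (Ω₁ Ω₂ : Set (Fin n → ℍ))
    (hΩ₁ : sliceOpen n Ω₁) (hrc : realPathConnected n Ω₁)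
    (hΩ₂ : sliceOpen n Ω₂) (hsp : stemPreserving n Ω₁ Ω₂)
    (f g : (Fin n → ℍ) → ℍ) (hf : SliceRegular n Ω₁ f) (hg : SliceRegular n Ω₂ g) :
    SliceRegular n Ω₁ (starProd n Ω₁ Ω₂ f g) :=
  statement7_general hΩ₁ hrc hΩ₂ hsp.1 hf hg
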